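/- Let A be a unital complex Banach algebra, n ≥ 2, and let e and f be n-potents in A. Set M = (1 + ‖e‖)^{2n}. If ‖e − f‖ < 2(n−1)/((n² + n + 2)·M), then there exists an invertible element z in A with ‖z − 1‖ < 1 and z e z^{-1} = f. In particular, e and f are similar. -/

import Mathlib

theorem npotent_pow_diff {A : Type*} [NormedRing A] (e f : A) (N : ℝ)
    (heN : ‖e‖ ≤ N) (hfN : ‖f‖ ≤ N) (k : ℕ) :
    ‖f ^ (k + 1) - e ^ (k + 1)‖ ≤ (k + 1 : ℝ) * ‖e - f‖ * N ^ k := by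
  have hN : 0 ≤ N := (norm_nonneg e).trans heN
  induction k with
  | zero => simp [norm_sub_rev]
  | succ k ih =>
    have h : f ^ (k + 1 + 1) - e ^ (k + 1 + 1)
        = f ^ (k + 1) * (f - e) + (f ^ (k + 1) - e ^ (k + 1)) * e := by
      rw [pow_succ f (k + 1), pow_succ e (k + 1)]; noncomm_ring
    have h1 : ‖f ^ (k + 1) * (f - e)‖ ≤ N ^ (k + 1) * ‖e - f‖ := by
      rw [norm_sub_rev e f]
      refine (norm_mul_le _ _).trans ?_
      gcongr
      exact (norm_pow_le' f (Nat.succ_pos k)).trans (by gcongr)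
    have h2 : ‖(f ^ (k + 1) - e ^ (k + 1)) * e‖ ≤ ((k + 1 : ℝ) * ‖e - f‖ * N ^ k) * N := by
      refine (norm_mul_le _ _).trans ?_
      gcongr
    rw [h]
    refine (norm_add_le _ _).trans ((add_le_add h1 h2).trans (le_of_eq ?_))
    push_cast; ring

/-- Let `A` be a unital complex Banach algebra, `n ≥ 2`, and `e`, `f` `n`-potents in `A`.
Set `M = (1 + ‖e‖)^(2n)`.  If `‖e - f‖ < 2(n-1)/((n² + n + 2)·M)`, then there is an
invertible `z` in `A` with `‖z - 1‖ < 1` and `z e z⁻¹ = f`; in particular `e ∼ₛ f`. -/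
theorem npotent_close_implies_similar {A : Type*} [NormedRing A] [NormedAlgebra ℂ A]
    [CompleteSpace A] (n : ℕ) (hn : 2 ≤ n)
    (e f : A) (he : e ^ n = e) (hf : f ^ n = f)
    (hclose : ‖e - f‖ < 2 * ((n : ℝ) - 1) /
      (((n : ℝ) ^ 2 + n + 2) * (1 + ‖e‖) ^ (2 * n))) :
    ∃ z : Aˣ, ‖z.val - 1‖ < 1 ∧ z.val * e * (z⁻¹).val = f := by
  obtain ⟨m, rfl⟩ : ∃ m, n = m + 1 := ⟨n - 1, by omega⟩
  have hm : 1 ≤ m := by omega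
  have hmR : (1 : ℝ) ≤ m := by exact_mod_cast hm
  have hm0 : (m : ℝ) ≠ 0 := by positivity
  set N := 1 + ‖e‖ with hN
  have hN1 : 1 ≤ N := by have := norm_nonneg e; linarith
  rw [lt_div_iff₀ (by positivity)] at hclose
  push_cast at hclose
  set δ := ‖e - f‖ with hδ
  have hδ0 : 0 ≤ δ := norm_nonneg _
  have hc : δ * N ^ (2 * (m + 1)) * ((m : ℝ) ^ 2 + 3 * m + 4) < 2 * m := by
    have : δ * N ^ (2 * (m + 1)) * ((m : ℝ) ^ 2 + 3 * m + 4)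
      = δ * ((((m : ℝ) + 1) ^ 2 + (m + 1) + 2) * N ^ (2 * (m + 1))) := by ring
    rw [this]; linarith
  have hδ1 : δ < 1 := by
    by_contra! h
    have h1 : 1 ≤ N ^ (2 * (m + 1)) := one_le_pow₀ hN1
    have h2 : 1 ≤ δ * N ^ (2 * (m + 1)) := by nlinarith
    nlinarith [sq_nonneg (m : ℝ)]
  have small : ∀ x : A, x ^ (m + 1) = x → ‖x‖ < 1 → x = 0 := by
    intro x hx h
    by_contra h0
    have hp : 0 < ‖x‖ := norm_pos_iff.mpr h0
    have h1 : ‖x‖ ≤ ‖x‖ ^ (m + 1) := by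
      conv_lhs => rw [← hx]
      exact norm_pow_le' x (Nat.succ_pos m)
    have h2 : ‖x‖ ^ (m + 1) < ‖x‖ := pow_lt_self_of_lt_one₀ hp h (by omega)
    linarith
  by_cases he1 : ‖e‖ < 1
  · have e0 := small e he he1
    have f0 : f = 0 := by
      apply small f hf
      rw [hδ, e0] at hδ1
      simpa using hδ1
    refine ⟨1, ?_, ?_⟩
    · simp
    · simp [e0, f0]
  push Not at he1
  have hN2 : 2 ≤ N := by linarith
  have heN : ‖e‖ ≤ N := by linarith
  have hfN : ‖f‖ ≤ N := by
    have h1 : ‖f‖ ≤ ‖e‖ + ‖f - e‖ := by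
      simpa using norm_add_le e (f - e)
    rw [norm_sub_rev, ← hδ] at h1
    linarith
  have hD := npotent_pow_diff e f N heN hfN
  rw [← hδ] at hD
  have epow : ∀ k, 1 ≤ k → ‖e ^ k‖ ≤ N ^ k := fun k hk =>
    (norm_pow_le' e hk).trans (by gcongr)
  have e2 : e ^ (2 * m) = e ^ m := by
    obtain ⟨r, rfl⟩ : ∃ r, m = r + 1 := ⟨m - 1, by omega⟩
    calc e ^ (2 * (r + 1)) = e ^ (r + 1 + 1) * e ^ r := by rw [← pow_add]; congr 1; ring
      _ = e ^ (r + 1) := by rw [he, pow_succ']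
  have ep : e ^ m * e = e := by rw [← pow_succ, he]
  have fq : f * f ^ m = f := by rw [← pow_succ', hf]
  obtain ⟨S, hS⟩ : ∃ S : A, S = ∑ k ∈ Finset.range m, f ^ (k + 1) * e ^ (2 * m - (k + 1)) :=
    ⟨_, rfl⟩
  have hcomm : f * S - S * e = 0 := by
    have h1 : f * S - S * e = ∑ k ∈ Finset.range m,
        (f ^ (k + 1 + 1) * e ^ (2 * m - (k + 1)) - f ^ (k + 1) * e ^ (2 * m - k)) := by
      rw [hS, Finset.mul_sum, Finset.sum_mul, ← Finset.sum_sub_distrib]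
      refine Finset.sum_congr rfl fun k hk => ?_
      have hk := Finset.mem_range.mp hk
      have : 2 * m - k = 2 * m - (k + 1) + 1 := by omega
      rw [this, pow_succ' f (k + 1), pow_succ e, mul_assoc, mul_assoc]
    rw [h1, Finset.sum_range_sub (fun k => f ^ (k + 1) * e ^ (2 * m - k)) m]
    have : 2 * m - m = m := by omega
    simp only [this, hf, Nat.sub_zero, zero_add, pow_one, e2, sub_self]
  have hSn : ‖S - (m : ℂ) • e ^ m‖ ≤ m * (m * δ * N ^ (2 * m - 1)) := by
    have h1 : S - (m : ℂ) • e ^ m = ∑ k ∈ Finset.range m,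
        (f ^ (k + 1) - e ^ (k + 1)) * e ^ (2 * m - (k + 1)) := by
      have h2 : ∀ k ∈ Finset.range m, (f ^ (k + 1) - e ^ (k + 1)) * e ^ (2 * m - (k + 1))
          = f ^ (k + 1) * e ^ (2 * m - (k + 1)) - e ^ m := by
        intro k hk
        have hk := Finset.mem_range.mp hk
        have : k + 1 + (2 * m - (k + 1)) = 2 * m := by omega
        rw [sub_mul, ← pow_add e, this, e2]
      rw [Finset.sum_congr rfl h2, Finset.sum_sub_distrib, ← hS]
      simp [Nat.cast_smul_eq_nsmul]
    rw [h1]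
    refine (norm_sum_le _ _).trans ?_
    have h3 : ∀ k ∈ Finset.range m, ‖(f ^ (k + 1) - e ^ (k + 1)) * e ^ (2 * m - (k + 1))‖
        ≤ m * δ * N ^ (2 * m - 1) := by
      intro k hk
      have hk := Finset.mem_range.mp hk
      have hkR : (k : ℝ) + 1 ≤ m := by exact_mod_cast hk
      have : 2 * m - 1 = k + (2 * m - (k + 1)) := by omega
      rw [this, pow_add N, ← mul_assoc]
      refine (norm_mul_le _ _).trans ?_
      have h4 := epow (2 * m - (k + 1)) (by omega)
      have h5 : ‖f ^ (k + 1) - e ^ (k + 1)‖ ≤ m * δ * N ^ k := (hD k).trans (by gcongr)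
      gcongr
    refine (Finset.sum_le_sum h3).trans ?_
    simp
  have hpq : ‖f ^ m - e ^ m‖ ≤ m * δ * N ^ (m - 1) := by
    have := hD (m - 1)
    rw [Nat.sub_add_cancel hm] at this
    refine this.trans (le_of_eq ?_)
    rw [Nat.cast_sub hm]; push_cast; ring
  have hpq2 : ‖(f ^ m - e ^ m) - (f ^ m - e ^ m) * e ^ m‖ ≤ 2 * (m * δ * N ^ (2 * m - 1)) := by
    have h1 : N ^ (2 * m - 1) = N ^ (m - 1) * N ^ m := by
      rw [← pow_add]; congr 1; omega
    have h2 : ‖(f ^ m - e ^ m) * e ^ m‖ ≤ m * δ * N ^ (2 * m - 1) := by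
      rw [h1, ← mul_assoc]
      refine (norm_mul_le _ _).trans ?_
      have := epow m hm
      gcongr
    have h3 : m * δ * N ^ (m - 1) ≤ m * δ * N ^ (2 * m - 1) := by
      gcongr
      omega
    have := norm_sub_le (f ^ m - e ^ m) ((f ^ m - e ^ m) * e ^ m)
    linarith
  obtain ⟨z, hz⟩ : ∃ z : A, z = (m : ℂ)⁻¹ • S + (1 - f ^ m) * (1 - e ^ m) := ⟨_, rfl⟩
  have hmC : (m : ℂ) ≠ 0 := by exact_mod_cast (by omega : m ≠ 0)
  have hz1 : z - 1 = (m : ℂ)⁻¹ • (S - (m : ℂ) • e ^ m)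
      - ((f ^ m - e ^ m) - (f ^ m - e ^ m) * e ^ m) := by
    rw [hz, smul_sub, smul_smul, inv_mul_cancel₀ hmC, one_smul, sub_mul (f ^ m) (e ^ m), ← pow_add,
      ← two_mul, e2, sub_mul 1 (f ^ m), mul_sub (f ^ m), one_mul, mul_one]
    abel
  have hfz : f * z = z * e := by
    have h1 : f * ((1 - f ^ m) * (1 - e ^ m)) = 0 := by
      rw [← mul_assoc, mul_sub f, mul_one, fq, sub_self, zero_mul]
    have h2 : (1 - f ^ m) * (1 - e ^ m) * e = 0 := by
      rw [mul_assoc, sub_mul 1 (e ^ m), one_mul, ep, sub_self, mul_zero]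
    rw [hz, mul_add, add_mul, h1, h2, mul_smul_comm, smul_mul_assoc, sub_eq_zero.mp hcomm]
  have hnorm : ‖z - 1‖ < 1 := by
    have h1 : ‖(m : ℂ)⁻¹ • (S - (m : ℂ) • e ^ m)‖ ≤ m * δ * N ^ (2 * m - 1) := by
      rw [norm_smul, norm_inv, Complex.norm_natCast]
      rw [inv_mul_le_iff₀ (by positivity)]
      exact hSn
    have h2 : ‖z - 1‖ ≤ 3 * (m * δ * N ^ (2 * m - 1)) := by
      rw [hz1]
      refine (norm_sub_le _ _).trans ?_
      linarith
    refine h2.trans_lt ?_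
    have h3 : N ^ (2 * (m + 1)) = N ^ (2 * m - 1) * N ^ 3 := by
      rw [← pow_add]; congr 1; omega
    have h4 : (8 : ℝ) ≤ N ^ 3 := by
      calc (8 : ℝ) = 2 ^ 3 := by norm_num
        _ ≤ N ^ 3 := by gcongr
    have hP : 0 ≤ N ^ (2 * m - 1) := by positivity
    set t := δ * N ^ (2 * m - 1) with ht
    have ht0 : 0 ≤ t := by positivity
    have h5 : t * 8 ≤ δ * N ^ (2 * (m + 1)) := by
      rw [h3, ← mul_assoc, ← ht]; gcongr
    have h6 : t * 8 * ((m : ℝ) ^ 2 + 3 * m + 4) < 2 * m :=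
      lt_of_le_of_lt (by gcongr) hc
    have h7 : 4 * (m * t) * m < 1 * m := by
      nlinarith [mul_nonneg ht0 (by positivity : (0 : ℝ) ≤ 3 * m + 4)]
    have h8 : 4 * (m * t) < 1 := lt_of_mul_lt_mul_right h7 (by positivity)
    have h9 : 0 ≤ m * t := by positivity
    rw [mul_assoc, ← ht]; linarith
  have hnorm' : ‖1 - z‖ < 1 := by rwa [norm_sub_rev]
  obtain ⟨u, hu⟩ : ∃ u : Aˣ, u.val = z := ⟨Units.oneSub (1 - z) hnorm', by simp⟩
  refine ⟨u, by rwa [hu], ?_⟩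
  rw [Units.mul_inv_eq_iff_eq_mul, hu, hfz]
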